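/- arXiv:2601.15922 — 3 statements merged into one kernel-verified Lean document; each statement's English description precedes it below -/
import Mathlib

section
/- Let d ≥ 1, 1 ≤ i ≤ d, and let φ : ℝ^d → [0,1] be radial, smooth, supported in {4/3 ≤ |ξ| ≤ 3/2}, not identically zero. Define f_n(x) = Γ_n ∑_{k=1}^n (1/k) χ(2^k x) with χ = ∂_i (φ̌) (inverse Fourier transform of φ) and Γ_n = 1/ln(ln n). Then the Riesz transform ℛ_i f_n, defined by the Fourier multiplier ξ_i/|ξ|, satisfies |ℛ_i f_n(0)| ≥ c̃ Γ_n ∑_{k=1}^n 1/k ≥ c̃ Γ_n ln n for a constant c̃ > 0 independent of n. -/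
open MeasureTheory Finset
open scoped FourierTransform

/-- `Γ_n = 1 / ln(ln n)`. -/
noncomputable def Gam (n : ℕ) : ℝ := 1 / Real.log (Real.log n)

/-- The (complex-valued) inverse Fourier transform of a real function. -/
noncomputable def phinv (d : ℕ) (φ : EuclideanSpace ℝ (Fin d) → ℝ) :
    EuclideanSpace ℝ (Fin d) → ℂ :=
  𝓕⁻ (fun ξ => (φ ξ : ℂ))

/-- The `i`-th Riesz transform, defined as the Fourier multiplier `ξ_i/|ξ|`. -/
noncomputable def Riesz (d : ℕ) (i : Fin d) (f : EuclideanSpace ℝ (Fin d) → ℂ) :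
    EuclideanSpace ℝ (Fin d) → ℂ :=
  𝓕⁻ (fun ξ => ((ξ i / ‖ξ‖ : ℝ) : ℂ) * 𝓕 f ξ)

/-- `f_n(x) = Γ_n ∑_{k=1}^n (1/k) χ(2^k x)` with `χ = ∂_i(φ̌)`. -/
noncomputable def fseq (d : ℕ) (i : Fin d) (φ : EuclideanSpace ℝ (Fin d) → ℝ) (n : ℕ) :
    EuclideanSpace ℝ (Fin d) → ℂ :=
  fun x => (Gam n : ℂ) * ∑ k ∈ Finset.Icc 1 n, ((1 / (k : ℝ) : ℝ) : ℂ) *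
    fderiv ℝ (phinv d φ) ((2 : ℝ) ^ k • x) (EuclideanSpace.single i 1)

open scoped SchwartzMap LineDeriv

lemma aux_chi (d : ℕ) (i : Fin d) (φ : EuclideanSpace ℝ (Fin d) → ℝ)
    (hsm : ContDiff ℝ (⊤ : ℕ∞) φ) (hc : HasCompactSupport φ) :
    ∃ χ : 𝓢(EuclideanSpace ℝ (Fin d), ℂ),
      (∀ x, fderiv ℝ (phinv d φ) x (EuclideanSpace.single i 1) = χ x) ∧
      ∀ ξ, 𝓕 (χ : EuclideanSpace ℝ (Fin d) → ℂ) ξ =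
        2 * Real.pi * Complex.I * ((ξ i : ℝ) : ℂ) * (φ ξ : ℂ) := by
  have hc' : HasCompactSupport (fun ξ => (φ ξ : ℂ)) := hc.comp_left (g := fun x : ℝ => (x : ℂ)) (by simp)
  have hs' : ContDiff ℝ (⊤ : ℕ∞) (fun ξ => (φ ξ : ℂ)) := Complex.ofRealCLM.contDiff.comp hsm
  let Φ : 𝓢(EuclideanSpace ℝ (Fin d), ℂ) := hc'.toSchwartzMap hs'
  have hΦ : ⇑Φ = fun ξ => (φ ξ : ℂ) := by ext x; simp [Φ]
  refine ⟨∂_{(EuclideanSpace.single i 1 : EuclideanSpace ℝ (Fin d))} (𝓕⁻ Φ), ?_, ?_⟩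
  · intro x
    rw [SchwartzMap.lineDerivOp_apply_eq_fderiv, SchwartzMap.fourierInv_coe, hΦ]
    rfl
  · intro ξ
    rw [← SchwartzMap.fourier_coe, SchwartzMap.fourier_lineDerivOp_eq]
    have : (inner ℝ · (EuclideanSpace.single i 1 : EuclideanSpace ℝ (Fin d))).HasTemperateGrowth := by
      fun_prop
    rw [SchwartzMap.smul_apply, SchwartzMap.smulLeftCLM_apply_apply this,
      FourierTransform.fourier_fourierInv_eq, hΦ]
    simp [EuclideanSpace.inner_single_right, mul_assoc]

lemma aux_scale (d : ℕ) (χ : EuclideanSpace ℝ (Fin d) → ℂ) (R : ℝ) (hR : 0 < R)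
    (ξ : EuclideanSpace ℝ (Fin d)) :
    𝓕 (fun x => χ (R • x)) ξ = ((R ^ d)⁻¹ : ℝ) • 𝓕 χ (R⁻¹ • ξ) := by
  rw [Real.fourier_eq, Real.fourier_eq]
  have h := Measure.integral_comp_smul_of_nonneg (volume : Measure (EuclideanSpace ℝ (Fin d)))
    (fun v => Real.fourierChar (-inner ℝ v (R⁻¹ • ξ)) • χ v) R (hR := hR.le)
  rw [finrank_euclideanSpace_fin] at h
  rw [← h]
  congr 1
  ext v
  rw [inner_smul_left, inner_smul_right]
  simp [hR.ne']

lemma aux_G (d : ℕ) (i : Fin d) (φ : EuclideanSpace ℝ (Fin d) → ℝ)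
    (hsm : Continuous φ)
    (hrange : ∀ ξ, φ ξ ∈ Set.Icc (0 : ℝ) 1)
    (hradial : ∀ ξ η : EuclideanSpace ℝ (Fin d), ‖ξ‖ = ‖η‖ → φ ξ = φ η)
    (hsupp : ∀ ξ, φ ξ ≠ 0 → 4 / 3 ≤ ‖ξ‖ ∧ ‖ξ‖ ≤ 3 / 2)
    (hne : φ ≠ 0) (hc : HasCompactSupport φ) :
    Integrable (fun ξ => ξ i ^ 2 / ‖ξ‖ * φ ξ) ∧ 0 < ∫ ξ, ξ i ^ 2 / ‖ξ‖ * φ ξ := by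
  have hG : (fun ξ => ξ i ^ 2 / ‖ξ‖ * φ ξ) = fun ξ => ξ i ^ 2 / max ‖ξ‖ 1 * φ ξ := by
    ext ξ
    by_cases h : φ ξ = 0
    · simp [h]
    · rw [max_eq_left]
      linarith [(hsupp ξ h).1]
  rw [hG]
  have hcont : Continuous (fun ξ : EuclideanSpace ℝ (Fin d) => ξ i ^ 2 / max ‖ξ‖ 1 * φ ξ) := by
    refine Continuous.mul (Continuous.div (by fun_prop) (by fun_prop) ?_) hsm
    intro x
    positivity
  have hcs : HasCompactSupport (fun ξ : EuclideanSpace ℝ (Fin d) => ξ i ^ 2 / max ‖ξ‖ 1 * φ ξ) :=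
    hc.mul_left
  refine ⟨hcont.integrable_of_hasCompactSupport hcs, ?_⟩
  obtain ⟨ξ₀, h0⟩ := Function.ne_iff.1 hne
  simp only [Pi.zero_apply] at h0
  have hpos : 0 < ‖ξ₀‖ := by linarith [(hsupp ξ₀ h0).1]
  refine hcont.integral_pos_of_hasCompactSupport_nonneg_nonzero (x := EuclideanSpace.single i ‖ξ₀‖) hcs ?_ ?_
  · intro ξ
    have := (hrange ξ).1
    simp only [Pi.zero_apply]
    positivity
  · have : φ (EuclideanSpace.single i ‖ξ₀‖) ≠ 0 := by
      rw [hradial _ ξ₀ (by simp)]; exact h0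
    refine mul_ne_zero (div_ne_zero ?_ (by positivity)) this
    simpa using hpos.ne'

lemma aux_fourier_fseq (d : ℕ) (i : Fin d) (φ : EuclideanSpace ℝ (Fin d) → ℝ)
    (hsm : ContDiff ℝ (⊤ : ℕ∞) φ) (hc : HasCompactSupport φ) (n : ℕ)
    (ξ : EuclideanSpace ℝ (Fin d)) :
    𝓕 (fseq d i φ n) ξ = (Gam n : ℂ) * ∑ k ∈ Finset.Icc 1 n, ((1 / (k : ℝ) : ℝ) : ℂ) *
      (((((2:ℝ) ^ k) ^ d)⁻¹ : ℝ) • (2 * Real.pi * Complex.I * (((((2:ℝ)^k)⁻¹ • ξ) i : ℝ) : ℂ) *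
        (φ (((2:ℝ)^k)⁻¹ • ξ) : ℂ))) := by
  obtain ⟨χ, h1, h2⟩ := aux_chi d i φ hsm hc
  have hint : ∀ k : ℕ, Integrable (fun x => χ ((2:ℝ)^k • x)) := fun k =>
    (χ.integrable (μ := volume)).comp_smul (by positivity)
  simp_rw [← h2, ← aux_scale d χ _ (show (0:ℝ) < 2 ^ _ by positivity)]
  unfold fseq
  simp_rw [h1, Real.fourier_eq, Circle.smul_def, smul_eq_mul, Finset.mul_sum]
  rw [integral_finset_sum]
  · refine Finset.sum_congr rfl fun k _ => ?_
    rw [← integral_const_mul, ← integral_const_mul]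
    congr 1
    ext v
    ring
  · intro k _
    have := (Real.fourierIntegral_convergent_iff (μ := volume) (f := fun x => χ ((2:ℝ)^k • x)) ξ).2 (hint k)
    convert! (this.const_mul ((Gam n : ℂ) * ((1 / (k : ℝ) : ℝ) : ℂ))) using 2
    simp only [Circle.smul_def, smul_eq_mul]
    ring

lemma aux_riesz (d : ℕ) (i : Fin d) (φ : EuclideanSpace ℝ (Fin d) → ℝ)
    (hsm : ContDiff ℝ (⊤ : ℕ∞) φ) (hc : HasCompactSupport φ) (n : ℕ)
    (hG : Integrable (fun ξ : EuclideanSpace ℝ (Fin d) => ξ i ^ 2 / ‖ξ‖ * φ ξ)) :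
    Riesz d i (fseq d i φ n) 0 = Complex.I *
      ((2 * Real.pi * (∫ ξ : EuclideanSpace ℝ (Fin d), ξ i ^ 2 / ‖ξ‖ * φ ξ) * Gam n *
        ∑ k ∈ Finset.Icc 1 n, (1 : ℝ) / k : ℝ) : ℂ) := by
  set G : EuclideanSpace ℝ (Fin d) → ℝ := fun ξ => ξ i ^ 2 / ‖ξ‖ * φ ξ with hGdef
  have key : ∀ ξ : EuclideanSpace ℝ (Fin d), ((ξ i / ‖ξ‖ : ℝ) : ℂ) * 𝓕 (fseq d i φ n) ξ =
      Complex.I * ((2 * Real.pi * Gam n * ∑ k ∈ Finset.Icc 1 n, (1 : ℝ) / k *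
        ((((2:ℝ) ^ k) ^ d)⁻¹ * G (((2:ℝ)^k)⁻¹ • ξ)) : ℝ) : ℂ) := by
    intro ξ
    rw [aux_fourier_fseq d i φ hsm hc]
    push_cast
    simp only [Finset.mul_sum]
    refine Finset.sum_congr rfl fun k _ => ?_
    simp only [hGdef, norm_smul, PiLp.smul_apply, smul_eq_mul, Complex.real_smul, norm_inv, norm_pow,
      Real.norm_ofNat]
    push_cast
    by_cases h : (‖ξ‖ : ℂ) = 0
    · simp [h]
    · have : (2:ℂ)^k ≠ 0 := pow_ne_zero _ two_ne_zero
      field_simp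
  unfold Riesz
  rw [Real.fourierInv_eq]
  simp only [inner_zero_right, AddChar.map_zero_eq_one, one_smul]
  simp_rw [key]
  rw [integral_const_mul, integral_complex_ofReal, integral_const_mul, integral_finset_sum]
  · congr 2
    have : ∀ k ∈ Finset.Icc 1 n, ∫ ξ, (1 : ℝ) / k *
        ((((2:ℝ) ^ k) ^ d)⁻¹ * G (((2:ℝ)^k)⁻¹ • ξ)) = (1 : ℝ) / k * ∫ ξ, G ξ := by
      intro k _
      rw [integral_const_mul, integral_const_mul,
        Measure.integral_comp_smul_of_nonneg _ _ _ (hR := by positivity), finrank_euclideanSpace_fin,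
        smul_eq_mul, inv_pow, inv_inv, inv_mul_cancel_left₀ (by positivity)]
    rw [Finset.sum_congr rfl this, ← Finset.sum_mul]
    ring
  · intro k _
    exact ((hG.comp_smul (by positivity)).const_mul _).const_mul _

/-- for radial, smooth `φ : ℝ^d → [0,1]` supported in `{4/3 ≤ |ξ| ≤ 3/2}`,
not identically zero, and `f_n` built from `χ = ∂_i(φ̌)`, the Riesz transform satisfies
`|ℛ_i f_n(0)| ≥ c̃ Γ_n ∑_{k=1}^n 1/k ≥ c̃ Γ_n ln n` for some `c̃ > 0` independent of `n`. -/
theorem stmt9 (d : ℕ) (hd : 1 ≤ d) (i : Fin d)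
    (φ : EuclideanSpace ℝ (Fin d) → ℝ)
    (hsm : ContDiff ℝ (⊤ : ℕ∞) φ)
    (hrange : ∀ ξ, φ ξ ∈ Set.Icc (0 : ℝ) 1)
    (hradial : ∀ ξ η : EuclideanSpace ℝ (Fin d), ‖ξ‖ = ‖η‖ → φ ξ = φ η)
    (hsupp : ∀ ξ, φ ξ ≠ 0 → 4 / 3 ≤ ‖ξ‖ ∧ ‖ξ‖ ≤ 3 / 2)
    (hne : φ ≠ 0) :
    ∃ c : ℝ, 0 < c ∧ ∀ n : ℕ, 3 ≤ n →
      c * Gam n * ∑ k ∈ Finset.Icc 1 n, (1 : ℝ) / k ≤ ‖Riesz d i (fseq d i φ n) 0‖ ∧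
      c * Gam n * Real.log n ≤ c * Gam n * ∑ k ∈ Finset.Icc 1 n, (1 : ℝ) / k := by
  have hc : HasCompactSupport φ := by
    refine HasCompactSupport.intro (isCompact_closedBall (0 : EuclideanSpace ℝ (Fin d)) (3/2)) ?_
    intro x hx
    by_contra h
    exact hx (by simpa using (hsupp x h).2)
  obtain ⟨hG, hpos⟩ := aux_G d i φ hsm.continuous hrange hradial hsupp hne hc
  refine ⟨2 * Real.pi * ∫ ξ : EuclideanSpace ℝ (Fin d), ξ i ^ 2 / ‖ξ‖ * φ ξ, by positivity, ?_⟩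
  intro n hn
  have hn' : (3:ℝ) ≤ n := by exact_mod_cast hn
  have hlog : 1 < Real.log n := by
    rw [Real.lt_log_iff_exp_lt (by linarith)]
    linarith [Real.exp_one_lt_d9]
  have hGam : 0 < Gam n := one_div_pos.2 (Real.log_pos hlog)
  constructor
  · rw [aux_riesz d i φ hsm hc n hG, norm_mul, Complex.norm_I, one_mul, Complex.norm_real]
    exact le_abs_self _
  · refine mul_le_mul_of_nonneg_left ?_ (by positivity)
    have h1 := log_add_one_le_harmonic n
    have h2 : Real.log n ≤ Real.log ((n + 1 : ℕ) : ℝ) :=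
      Real.log_le_log (by linarith) (by push_cast; linarith)
    refine (h2.trans h1).trans (le_of_eq ?_)
    rw [harmonic_eq_sum_Icc]
    push_cast
    simp
end

section
/- Let φ : ℝ³ → [0,1] be radial, smooth, non-negative, ≢ 0, supported in {4/3 ≤ |ξ| ≤ 3/2}, and define f_n(x) = Γ_n ∑_{k=1}^n (1/k) 2^{−2k}(x₃ ∂₃φ̌)(2^k x), Γ_n = 1/ln ln n. Then the Fourier multiplier operator T with symbol ξ₃²(ξ₁²+ξ₂²)/|ξ|² satisfies |T f_n(0)| ≥ c₀ Γ_n ∑_{k=1}^n 1/k ≥ c₀ Γ_n ln n, where c₀ = 2(2π)^{-3/2} ∫_{ℝ³} (ξ₁²+ξ₂²)² ξ₃⁴ |ξ|^{−4} φ(ξ) dξ > 0. -/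
open MeasureTheory Finset
open scoped FourierTransform

/-- The (complex-valued) inverse Fourier transform of a real function on `ℝ³`. -/
noncomputable def phinv3 (φ : EuclideanSpace ℝ (Fin 3) → ℝ) :
    EuclideanSpace ℝ (Fin 3) → ℂ :=
  𝓕⁻ (fun ξ => (φ ξ : ℂ))

/-- `f_n(x) = Γ_n ∑_{k=1}^n (1/k) 2^{-2k} (x₃ ∂₃φ̌)(2^k x)`. -/
noncomputable def fCor (φ : EuclideanSpace ℝ (Fin 3) → ℝ) (n : ℕ) :
    EuclideanSpace ℝ (Fin 3) → ℂ :=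
  fun x => (Gam n : ℂ) * ∑ k ∈ Finset.Icc 1 n,
    (((1 / (k : ℝ)) * (2 : ℝ) ^ (-(2 * (k : ℤ))) * (((2 : ℝ) ^ k • x) 2) : ℝ) : ℂ) *
      fderiv ℝ (phinv3 φ) ((2 : ℝ) ^ k • x) (EuclideanSpace.single 2 1)

/-- The Fourier multiplier with symbol `ξ₃²(ξ₁²+ξ₂²)/|ξ|²`. -/
noncomputable def Tmult (f : EuclideanSpace ℝ (Fin 3) → ℂ) :
    EuclideanSpace ℝ (Fin 3) → ℂ :=
  𝓕⁻ (fun ξ => (((ξ 2) ^ 2 * ((ξ 0) ^ 2 + (ξ 1) ^ 2) / ‖ξ‖ ^ 2 : ℝ) : ℂ) * 𝓕 f ξ)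


open scoped SchwartzMap LineDeriv

/-- The symbol of the multiplier. -/
noncomputable def symb (ξ : EuclideanSpace ℝ (Fin 3)) : ℝ :=
  (ξ 2) ^ 2 * ((ξ 0) ^ 2 + (ξ 1) ^ 2) / ‖ξ‖ ^ 2

lemma nsq (ξ : EuclideanSpace ℝ (Fin 3)) : ‖ξ‖ ^ 2 = ξ 0 ^ 2 + ξ 1 ^ 2 + ξ 2 ^ 2 := by
  rw [EuclideanSpace.real_norm_sq_eq, Fin.sum_univ_three]

lemma symb_smul (c : ℝ) (hc : c ≠ 0) (ξ : EuclideanSpace ℝ (Fin 3)) :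
    symb (c • ξ) = c ^ 2 * symb ξ := by
  have hcc : |c| ^ 2 = c ^ 2 := sq_abs c
  simp only [symb, PiLp.smul_apply, smul_eq_mul, norm_smul, Real.norm_eq_abs, mul_pow, hcc]
  by_cases h : ‖ξ‖ ^ 2 = 0
  · rw [h]; simp
  · field_simp

lemma symb_nonneg (ξ : EuclideanSpace ℝ (Fin 3)) : 0 ≤ symb ξ := by
  unfold symb; positivity

lemma symb_le (ξ : EuclideanSpace ℝ (Fin 3)) : symb ξ ≤ ‖ξ‖ ^ 2 := by
  unfold symb
  apply div_le_of_le_mul₀ (by positivity) (by positivity)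
  rw [nsq]
  nlinarith [sq_nonneg (ξ 0), sq_nonneg (ξ 1), sq_nonneg (ξ 2), mul_nonneg (sq_nonneg (ξ 0)) (sq_nonneg (ξ 2)), mul_nonneg (sq_nonneg (ξ 1)) (sq_nonneg (ξ 2)), sq_nonneg (ξ 0 ^ 2 + ξ 1 ^ 2), sq_nonneg (ξ 2 ^ 2)]

lemma symb_meas : Measurable symb := by
  unfold symb
  fun_prop

lemma symb_hasDeriv (ξ : EuclideanSpace ℝ (Fin 3)) :
    DifferentiableAt ℝ symb ξ ∧
    fderiv ℝ symb ξ (EuclideanSpace.single 2 1) =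
      2 * ξ 2 * (ξ 0 ^ 2 + ξ 1 ^ 2) ^ 2 / ‖ξ‖ ^ 4 := by
  by_cases h : ξ = 0
  · subst h
    have : HasFDerivAt symb (0 : EuclideanSpace ℝ (Fin 3) →L[ℝ] ℝ) 0 := by
      apply Asymptotics.IsBigO.hasFDerivAt (n := 2) _ (by norm_num)
      apply Asymptotics.IsBigO.of_bound 1
      filter_upwards with x
      rw [Real.norm_of_nonneg (symb_nonneg x)]
      simpa using symb_le x
    refine ⟨this.differentiableAt, ?_⟩
    rw [this.fderiv]; simp
  · have hn : ‖ξ‖ ^ 2 ≠ 0 := by simpa using h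
    have e : symb = fun ξ : EuclideanSpace ℝ (Fin 3) =>
        (ξ 2) ^ 2 * ((ξ 0) ^ 2 + (ξ 1) ^ 2) / (ξ 0 ^ 2 + ξ 1 ^ 2 + ξ 2 ^ 2) := by
      funext η; rw [symb, nsq]
    have hd : DifferentiableAt ℝ symb ξ := by
      rw [e]
      rw [nsq] at hn
      fun_prop (disch := assumption)
    refine ⟨hd, ?_⟩
    rw [← hd.lineDeriv_eq_fderiv]
    apply HasLineDerivAt.lineDeriv
    unfold HasLineDerivAt
    rw [e]
    have hn2 := hn
    rw [nsq] at hn2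
    have h4 : ‖ξ‖ ^ 4 = (ξ 0 ^ 2 + ξ 1 ^ 2 + ξ 2 ^ 2) ^ 2 := by rw [← nsq]; ring
    have h2 : HasDerivAt (fun t : ℝ => (ξ 2 + t)) 1 0 := by
      simpa using (hasDerivAt_id (0:ℝ)).const_add (ξ 2)
    have := ((h2.pow 2).mul_const (ξ 0 ^ 2 + ξ 1 ^ 2)).div
      ((h2.pow 2).const_add (ξ 0 ^ 2 + ξ 1 ^ 2)) (by simpa using hn2)
    refine (this.congr_deriv (g' := 2 * ξ 2 * (ξ 0 ^ 2 + ξ 1 ^ 2) ^ 2 / ‖ξ‖ ^ 4) ?_).congr_of_eventuallyEq ?_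
    · rw [h4]; simp; field_simp; ring
    · filter_upwards with t; simp

lemma symb_schwartz_int (h : 𝓢(EuclideanSpace ℝ (Fin 3), ℂ)) :
    Integrable (fun ξ => (symb ξ : ℂ) * h ξ) := by
  refine (h.integrable_pow_mul volume 2).mono' ?_ ?_
  · exact ((Complex.measurable_ofReal.comp symb_meas).aestronglyMeasurable).mul h.continuous.aestronglyMeasurable
  · filter_upwards with x
    rw [norm_mul, Complex.norm_real, Real.norm_of_nonneg (symb_nonneg x)]
    gcongr
    exact symb_le x

lemma fourier_scale (F : EuclideanSpace ℝ (Fin 3) → ℂ) (c : ℝ) (hc : 0 < c)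
    (ξ : EuclideanSpace ℝ (Fin 3)) :
    𝓕 (fun x => F (c • x)) ξ = ((c ^ 3)⁻¹ : ℝ) • 𝓕 F (c⁻¹ • ξ) := by
  rw [Real.fourier_eq, Real.fourier_eq]
  have := Measure.integral_comp_smul (volume : Measure (EuclideanSpace ℝ (Fin 3)))
    (fun v => Real.fourierChar (-inner ℝ v (c⁻¹ • ξ)) • F v) c
  simp only [finrank_euclideanSpace, Fintype.card_fin] at this
  rw [abs_of_pos (by positivity)] at this
  rw [← this]
  congr 1
  funext v
  rw [inner_smul_left, inner_smul_right]
  simp only [conj_trivial, mul_inv_cancel_left₀ hc.ne']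

lemma Tmult_lin (h F : 𝓢(EuclideanSpace ℝ (Fin 3), ℂ))
    (hF : ∀ ξ, 𝓕 (F : EuclideanSpace ℝ (Fin 3) → ℂ) ξ = h ξ) (G : ℂ) (a : ℕ → ℂ) (c : ℕ → ℝ) (hc : ∀ k, 0 < c k)
    (s : Finset ℕ) :
    Tmult (fun x => G * ∑ k ∈ s, a k * F (c k • x)) 0 =
      G * ∑ k ∈ s, a k * (c k) ^ 2 * ∫ ξ, (symb ξ : ℂ) * h ξ := by
  have key : ∀ ξ, 𝓕 (fun x : EuclideanSpace ℝ (Fin 3) => G * ∑ k ∈ s, a k * F (c k • x)) ξ =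
      G * ∑ k ∈ s, a k * (((c k ^ 3)⁻¹ : ℝ) • h ((c k)⁻¹ • ξ)) := by
    intro ξ
    have hI : ∀ k, Integrable (fun x => F (c k • x)) := fun k =>
      F.integrable.comp_smul (hc k).ne'
    have e1 : ∀ k, h ((c k)⁻¹ • ξ) = 𝓕 (⇑F) ((c k)⁻¹ • ξ) := by
      intro k
      rw [hF]
    simp_rw [e1, ← fun k => fourier_scale (⇑F) (c k) (hc k) ξ]
    simp only [Real.fourier_eq]
    simp_rw [← integral_const_mul]
    rw [← integral_finsetSum, ← integral_const_mul]
    · congr 1; funext v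
      simp only [Circle.smul_def, smul_eq_mul, Finset.mul_sum]
      refine Finset.sum_congr rfl fun k _ => ?_
      ring
    · intro k _
      exact ((Real.fourierIntegral_convergent_iff ξ).2 (hI k)).const_mul _
  have h0 : ∀ u : EuclideanSpace ℝ (Fin 3) → ℂ, 𝓕⁻ u 0 = ∫ ξ, u ξ := by
    intro u; rw [Real.fourierInv_eq]; simp
  rw [Tmult, h0]
  simp_rw [key]
  have hS := symb_schwartz_int h
  have e2 : ∀ k ξ, (symb ξ : ℂ) * h ((c k)⁻¹ • ξ) =
      (c k ^ 2 : ℂ) * (fun η => (symb η : ℂ) * h η) ((c k)⁻¹ • ξ) := by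
    intro k ξ
    have : symb ξ = c k ^ 2 * symb ((c k)⁻¹ • ξ) := by
      rw [← symb_smul _ (hc k).ne', smul_inv_smul₀ (hc k).ne']
    simp only
    rw [this]; push_cast; ring
  have e3 : ∀ ξ : EuclideanSpace ℝ (Fin 3), (((ξ 2) ^ 2 * ((ξ 0) ^ 2 + (ξ 1) ^ 2) / ‖ξ‖ ^ 2 : ℝ) : ℂ) *
      (G * ∑ k ∈ s, a k * (((c k ^ 3)⁻¹ : ℝ) • h ((c k)⁻¹ • ξ))) =
      G * ∑ k ∈ s, (a k * ((c k ^ 3)⁻¹ : ℝ) * (c k ^ 2 : ℂ)) * (fun η => (symb η : ℂ) * h η) ((c k)⁻¹ • ξ) := by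
    intro ξ
    change (symb ξ : ℂ) * _ = _
    rw [mul_left_comm, Finset.mul_sum]
    congr 1
    refine Finset.sum_congr rfl fun k _ => ?_
    rw [mul_assoc _ (c k ^ 2 : ℂ), ← e2, Complex.real_smul]; ring
  simp_rw [e3]
  rw [integral_const_mul, integral_finsetSum]
  · congr 1
    refine Finset.sum_congr rfl fun k _ => ?_
    rw [integral_const_mul, Measure.integral_comp_smul volume (fun η => (symb η : ℂ) * h η) (c k)⁻¹]
    simp only [finrank_euclideanSpace, Fintype.card_fin]
    have := hc k
    rw [abs_of_pos (by positivity), Complex.real_smul]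
    have h' : (c k : ℂ) ≠ 0 := by exact_mod_cast this.ne'
    push_cast
    field_simp
  · intro k _
    exact (hS.comp_smul (inv_ne_zero (hc k).ne')).const_mul _


lemma phi_compact (φ : EuclideanSpace ℝ (Fin 3) → ℝ) (hsupp : ∀ ξ, φ ξ ≠ 0 → 4 / 3 ≤ ‖ξ‖ ∧ ‖ξ‖ ≤ 3 / 2) : HasCompactSupport φ := by
  apply HasCompactSupport.of_support_subset_isCompact (isCompact_closedBall 0 (3/2))
  intro ξ hξ
  simpa using (hsupp ξ hξ).2

lemma int_aux (φ : EuclideanSpace ℝ (Fin 3) → ℝ) (hsm : ContDiff ℝ (⊤ : ℕ∞) φ)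
    (hrange : ∀ ξ, φ ξ ∈ Set.Icc (0 : ℝ) 1)
    (hsupp : ∀ ξ, φ ξ ≠ 0 → 4 / 3 ≤ ‖ξ‖ ∧ ‖ξ‖ ≤ 3 / 2)
    (q : EuclideanSpace ℝ (Fin 3) → ℝ) (hq : Measurable q) (C : ℝ)
    (hC : ∀ ξ, 4 / 3 ≤ ‖ξ‖ → ‖ξ‖ ≤ 3 / 2 → |q ξ| ≤ C) :
    Integrable (fun ξ => q ξ * φ ξ) := by
  have hφ : Integrable φ := hsm.continuous.integrable_of_hasCompactSupport (phi_compact φ hsupp)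
  refine (hφ.const_mul C).mono' (hq.aestronglyMeasurable.mul hsm.continuous.aestronglyMeasurable) ?_
  filter_upwards with ξ
  rw [norm_mul, Real.norm_eq_abs, Real.norm_of_nonneg (hrange ξ).1]
  by_cases h : φ ξ = 0
  · simp [h]
  · exact mul_le_mul_of_nonneg_right (hC ξ (hsupp ξ h).1 (hsupp ξ h).2) (hrange ξ).1

lemma bd4 (ξ : EuclideanSpace ℝ (Fin 3)) :
    |((ξ 0) ^ 2 + (ξ 1) ^ 2) ^ 2 * (ξ 2) ^ 4 / ‖ξ‖ ^ 4| ≤ ‖ξ‖ ^ 4 := by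
  rw [abs_of_nonneg (by positivity)]
  apply div_le_of_le_mul₀ (by positivity) (by positivity)
  have h1 : ((ξ 0) ^ 2 + (ξ 1) ^ 2) ≤ ‖ξ‖ ^ 2 := by rw [nsq]; nlinarith [sq_nonneg (ξ 2)]
  have h2 : (ξ 2) ^ 2 ≤ ‖ξ‖ ^ 2 := by rw [nsq]; nlinarith [sq_nonneg (ξ 1), sq_nonneg (ξ 0)]
  calc _ = ((ξ 0) ^ 2 + (ξ 1) ^ 2) ^ 2 * ((ξ 2) ^ 2) ^ 2 := by ring
    _ ≤ (‖ξ‖ ^ 2) ^ 2 * (‖ξ‖ ^ 2) ^ 2 := by gcongr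
    _ = _ := by ring

lemma bd2 (ξ : EuclideanSpace ℝ (Fin 3)) :
    |2 * (((ξ 0) ^ 2 + (ξ 1) ^ 2) ^ 2 * (ξ 2) ^ 2 / ‖ξ‖ ^ 4)| ≤ 2 * ‖ξ‖ ^ 2 := by
  rw [abs_of_nonneg (by positivity)]
  gcongr
  apply div_le_of_le_mul₀ (by positivity) (by positivity)
  have h1 : ((ξ 0) ^ 2 + (ξ 1) ^ 2) ≤ ‖ξ‖ ^ 2 := by rw [nsq]; nlinarith [sq_nonneg (ξ 2)]
  have h2 : (ξ 2) ^ 2 ≤ ‖ξ‖ ^ 2 := by rw [nsq]; nlinarith [sq_nonneg (ξ 1), sq_nonneg (ξ 0)]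
  calc _ ≤ (‖ξ‖ ^ 2) ^ 2 * (‖ξ‖ ^ 2) := by gcongr
    _ = _ := by ring

lemma int4 (φ : EuclideanSpace ℝ (Fin 3) → ℝ)
    (hsm : ContDiff ℝ (⊤ : ℕ∞) φ)
    (hrange : ∀ ξ, φ ξ ∈ Set.Icc (0 : ℝ) 1)
    (hsupp : ∀ ξ, φ ξ ≠ 0 → 4 / 3 ≤ ‖ξ‖ ∧ ‖ξ‖ ≤ 3 / 2) : Integrable (fun ξ : EuclideanSpace ℝ (Fin 3) =>
    ((ξ 0) ^ 2 + (ξ 1) ^ 2) ^ 2 * (ξ 2) ^ 4 / ‖ξ‖ ^ 4 * φ ξ) := by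
  refine int_aux φ hsm hrange hsupp (fun ξ => ((ξ 0) ^ 2 + (ξ 1) ^ 2) ^ 2 * (ξ 2) ^ 4 / ‖ξ‖ ^ 4)
    (by fun_prop) ((3/2)^4) fun ξ _ h => (bd4 ξ).trans (by gcongr)

lemma int2 (φ : EuclideanSpace ℝ (Fin 3) → ℝ)
    (hsm : ContDiff ℝ (⊤ : ℕ∞) φ)
    (hrange : ∀ ξ, φ ξ ∈ Set.Icc (0 : ℝ) 1)
    (hsupp : ∀ ξ, φ ξ ≠ 0 → 4 / 3 ≤ ‖ξ‖ ∧ ‖ξ‖ ≤ 3 / 2) : Integrable (fun ξ : EuclideanSpace ℝ (Fin 3) =>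
    2 * (((ξ 0) ^ 2 + (ξ 1) ^ 2) ^ 2 * (ξ 2) ^ 2 / ‖ξ‖ ^ 4) * φ ξ) := by
  refine int_aux φ hsm hrange hsupp
    (fun ξ => 2 * (((ξ 0) ^ 2 + (ξ 1) ^ 2) ^ 2 * (ξ 2) ^ 2 / ‖ξ‖ ^ 4))
    (by fun_prop) (2 * (3/2)^2) fun ξ _ h => (bd2 ξ).trans (by gcongr)

lemma pos4 (φ : EuclideanSpace ℝ (Fin 3) → ℝ)
    (hsm : ContDiff ℝ (⊤ : ℕ∞) φ)
    (hrange : ∀ ξ, φ ξ ∈ Set.Icc (0 : ℝ) 1)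
    (hradial : ∀ ξ η : EuclideanSpace ℝ (Fin 3), ‖ξ‖ = ‖η‖ → φ ξ = φ η)
    (hsupp : ∀ ξ, φ ξ ≠ 0 → 4 / 3 ≤ ‖ξ‖ ∧ ‖ξ‖ ≤ 3 / 2)
    (hne : φ ≠ 0) : 0 < ∫ ξ : EuclideanSpace ℝ (Fin 3),
    ((ξ 0) ^ 2 + (ξ 1) ^ 2) ^ 2 * (ξ 2) ^ 4 / ‖ξ‖ ^ 4 * φ ξ := by
  rw [integral_pos_iff_support_of_nonneg _ (int4 φ hsm hrange hsupp)]
  · have hc := hsm.continuous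
    have ho : IsOpen {ξ : EuclideanSpace ℝ (Fin 3) | φ ξ * ξ 0 * ξ 2 ≠ 0} :=
      isOpen_ne_fun (by fun_prop) continuous_const
    refine lt_of_lt_of_le (ho.measure_pos volume ?_) (measure_mono ?_)
    · obtain ⟨ξ, hξ⟩ := Function.ne_iff.1 hne
      have hn : ‖ξ‖ ≠ 0 := by have := (hsupp ξ hξ).1; linarith
      have hs : (√2 : ℝ) ≠ 0 := by positivity
      refine ⟨!₂[‖ξ‖ / √2, 0, ‖ξ‖ / √2], ?_⟩
      have hh : φ !₂[‖ξ‖ / √2, 0, ‖ξ‖ / √2] = φ ξ := by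
        apply hradial
        rw [← sq_eq_sq₀ (norm_nonneg _) (norm_nonneg _), nsq]
        simp [div_pow]
      simp only [Set.mem_ofPred_eq, hh]
      simp only [ne_eq, mul_eq_zero, not_or]
      refine ⟨⟨hξ, ?_⟩, ?_⟩ <;> simp [hn]
    · intro ξ hξ
      simp only [Set.mem_ofPred_eq, ne_eq, mul_eq_zero, not_or] at hξ
      obtain ⟨⟨h1, h2⟩, h3⟩ := hξ
      have hn : 0 < ‖ξ‖ := by have := (hsupp ξ h1).1; linarith
      have : 0 < φ ξ := lt_of_le_of_ne (hrange ξ).1 (Ne.symm h1)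
      rw [Function.mem_support]
      positivity
  · intro ξ
    have := (hrange ξ).1
    simp only [Pi.zero_apply]
    positivity

lemma le42 (φ : EuclideanSpace ℝ (Fin 3) → ℝ)
    (hsm : ContDiff ℝ (⊤ : ℕ∞) φ)
    (hrange : ∀ ξ, φ ξ ∈ Set.Icc (0 : ℝ) 1)
    (hsupp : ∀ ξ, φ ξ ≠ 0 → 4 / 3 ≤ ‖ξ‖ ∧ ‖ξ‖ ≤ 3 / 2) : (∫ ξ : EuclideanSpace ℝ (Fin 3),
    ((ξ 0) ^ 2 + (ξ 1) ^ 2) ^ 2 * (ξ 2) ^ 4 / ‖ξ‖ ^ 4 * φ ξ) ≤ (9 / 8) * 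
    ∫ ξ : EuclideanSpace ℝ (Fin 3),
    2 * (((ξ 0) ^ 2 + (ξ 1) ^ 2) ^ 2 * (ξ 2) ^ 2 / ‖ξ‖ ^ 4) * φ ξ := by
  rw [← integral_const_mul]
  refine integral_mono (int4 φ hsm hrange hsupp) ((int2 φ hsm hrange hsupp).const_mul _) fun ξ => ?_
  by_cases h : φ ξ = 0
  · simp [h]
  have h0 := (hrange ξ).1
  have h2 : (ξ 2) ^ 2 ≤ 9 / 4 := by
    have : (ξ 2) ^ 2 ≤ ‖ξ‖ ^ 2 := by rw [nsq]; nlinarith [sq_nonneg (ξ 1), sq_nonneg (ξ 0)]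
    nlinarith [(hsupp ξ h).2, norm_nonneg ξ]
  simp only
  calc _ = ((ξ 0) ^ 2 + (ξ 1) ^ 2) ^ 2 * (ξ 2) ^ 2 / ‖ξ‖ ^ 4 * φ ξ * (ξ 2) ^ 2 := by ring
    _ ≤ ((ξ 0) ^ 2 + (ξ 1) ^ 2) ^ 2 * (ξ 2) ^ 2 / ‖ξ‖ ^ 4 * φ ξ * (9 / 4) := by gcongr
    _ = _ := by ring

lemma ibp (φ : EuclideanSpace ℝ (Fin 3) → ℝ)
    (hsm : ContDiff ℝ (⊤ : ℕ∞) φ)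
    (hrange : ∀ ξ, φ ξ ∈ Set.Icc (0 : ℝ) 1)
    (hsupp : ∀ ξ, φ ξ ≠ 0 → 4 / 3 ≤ ‖ξ‖ ∧ ‖ξ‖ ≤ 3 / 2)
    (hint : Integrable (fun ξ : EuclideanSpace ℝ (Fin 3) =>
      symb ξ * fderiv ℝ (fun η => η 2 * φ η) ξ (EuclideanSpace.single 2 1))) :
    ∫ ξ, symb ξ * fderiv ℝ (fun η : EuclideanSpace ℝ (Fin 3) => η 2 * φ η) ξ (EuclideanSpace.single 2 1) =
    - ∫ ξ : EuclideanSpace ℝ (Fin 3),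
    2 * (((ξ 0) ^ 2 + (ξ 1) ^ 2) ^ 2 * (ξ 2) ^ 2 / ‖ξ‖ ^ 4) * φ ξ := by
  have hd := hsm.differentiable (by simp)
  have e : (fun ξ => fderiv ℝ symb ξ (EuclideanSpace.single 2 1) * (ξ 2 * φ ξ)) =
    fun ξ : EuclideanSpace ℝ (Fin 3) =>
    2 * (((ξ 0) ^ 2 + (ξ 1) ^ 2) ^ 2 * (ξ 2) ^ 2 / ‖ξ‖ ^ 4) * φ ξ := by
    funext ξ
    rw [(symb_hasDeriv ξ).2]; ring
  rw [integral_mul_fderiv_eq_neg_fderiv_mul_of_integrable _ hint _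
    (fun x _ => (symb_hasDeriv x).1) (fun x _ => by fun_prop), e]
  · rw [e]; exact int2 φ hsm hrange hsupp
  · simp_rw [← mul_assoc]
    refine int_aux φ hsm hrange hsupp (fun ξ => symb ξ * ξ 2)
      (symb_meas.mul (by fun_prop)) ((3/2)^2 * (3/2)) fun ξ _ h => ?_
    rw [abs_mul, abs_of_nonneg (symb_nonneg ξ)]
    have h2 : |ξ 2| ≤ 3 / 2 := by
      simpa using (PiLp.norm_apply_le ξ 2).trans h
    have h3 := symb_le ξ
    have : symb ξ ≤ (3/2)^2 := h3.trans (by gcongr)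
    gcongr

lemma Tval (φ : EuclideanSpace ℝ (Fin 3) → ℝ)
    (hsm : ContDiff ℝ (⊤ : ℕ∞) φ)
    (hrange : ∀ ξ, φ ξ ∈ Set.Icc (0 : ℝ) 1)
    (hsupp : ∀ ξ, φ ξ ≠ 0 → 4 / 3 ≤ ‖ξ‖ ∧ ‖ξ‖ ≤ 3 / 2)
    (n : ℕ) : Tmult (fCor φ n) 0 = ((Gam n * ((∑ k ∈ Finset.Icc 1 n, (1 : ℝ) / k) *
    ∫ ξ : EuclideanSpace ℝ (Fin 3),
    2 * (((ξ 0) ^ 2 + (ξ 1) ^ 2) ^ 2 * (ξ 2) ^ 2 / ‖ξ‖ ^ 4) * φ ξ) : ℝ) : ℂ) := by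
  set e : EuclideanSpace ℝ (Fin 3) := EuclideanSpace.single 2 1 with he
  have hd := hsm.differentiable (by simp)
  have hcs : HasCompactSupport (fun ξ => (φ ξ : ℂ)) :=
    (phi_compact φ hsupp).comp_left (g := fun x : ℝ => (x : ℂ)) (by simp)
  let g : 𝓢(EuclideanSpace ℝ (Fin 3), ℂ) :=
    hcs.toSchwartzMap (Complex.ofRealCLM.contDiff.comp hsm)
  have hg : ∀ ξ, g ξ = (φ ξ : ℂ) := fun ξ => rfl
  have hin : ∀ x : EuclideanSpace ℝ (Fin 3), inner ℝ x e = x 2 := by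
    intro x; simp [he, EuclideanSpace.inner_single_right]
  have htg : (fun x : EuclideanSpace ℝ (Fin 3) => inner ℝ x e).HasTemperateGrowth := by fun_prop
  let g1 : 𝓢(EuclideanSpace ℝ (Fin 3), ℂ) := SchwartzMap.smulLeftCLM ℂ (inner ℝ · e) g
  have hg1 : ∀ ξ, g1 ξ = ((ξ 2 * φ ξ : ℝ) : ℂ) := by
    intro ξ
    simp only [g1]
    rw [SchwartzMap.smulLeftCLM_apply_apply htg, hin, hg, Complex.real_smul]
    push_cast; rfl
  let h : 𝓢(EuclideanSpace ℝ (Fin 3), ℂ) := - ∂_{e} g1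
  let F : 𝓢(EuclideanSpace ℝ (Fin 3), ℂ) := 𝓕⁻ h
  have hFh : ∀ ξ, 𝓕 (F : EuclideanSpace ℝ (Fin 3) → ℂ) ξ = h ξ := by
    intro ξ
    rw [← SchwartzMap.fourier_coe]
    simp [F]
  have hder : ∀ ξ, h ξ = ((-(fderiv ℝ (fun η : EuclideanSpace ℝ (Fin 3) => η 2 * φ η) ξ e) : ℝ) : ℂ) := by
    intro ξ
    have e1 : h ξ = - fderiv ℝ g1 ξ e := by
      simp [h, SchwartzMap.lineDerivOp_apply_eq_fderiv]
    rw [e1]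
    have e2 : (g1 : EuclideanSpace ℝ (Fin 3) → ℂ) = fun η => ((η 2 * φ η : ℝ) : ℂ) := funext hg1
    have hw : DifferentiableAt ℝ (fun η : EuclideanSpace ℝ (Fin 3) => η 2 * φ η) ξ := by fun_prop
    rw [e2]
    have := (Complex.ofRealCLM.hasFDerivAt.comp ξ hw.hasFDerivAt).fderiv
    have e3 : fderiv ℝ (fun η : EuclideanSpace ℝ (Fin 3) => ((η 2 * φ η : ℝ) : ℂ)) ξ = _ := this
    rw [e3]; simp
  have hF : ∀ x, F x = ((x 2 : ℝ) : ℂ) * fderiv ℝ (phinv3 φ) x e := by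
    intro x
    have e1 : phinv3 φ = (𝓕⁻ g : 𝓢(EuclideanSpace ℝ (Fin 3), ℂ)) := by
      rw [SchwartzMap.fourierInv_coe]; rfl
    rw [e1, ← SchwartzMap.lineDerivOp_apply_eq_fderiv, SchwartzMap.lineDerivOp_fourierInv_eq]
    have e2 : F = - 𝓕⁻ (∂_{e} g1) := by
      simp only [F, h]
      rw [FourierTransform.fourierInv_neg]
    rw [e2, SchwartzMap.fourierInv_lineDerivOp_eq, FourierTransform.fourierInv_smul]
    simp only [smul_apply, neg_smul, neg_neg]
    rw [SchwartzMap.smulLeftCLM_apply_apply htg, hin, Complex.real_smul]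
    simp only [smul_eq_mul, g1]
    ring
  have hf : fCor φ n = fun x => (Gam n : ℂ) * ∑ k ∈ Finset.Icc 1 n,
      (((1 / (k : ℝ)) * (2 : ℝ) ^ (-(2 * (k : ℤ))) : ℝ) : ℂ) * F ((2 : ℝ) ^ k • x) := by
    funext x
    rw [fCor]
    congr 1
    refine Finset.sum_congr rfl fun k _ => ?_
    rw [hF]; push_cast; ring
  rw [hf, Tmult_lin h F hFh _ _ (fun k => (2 : ℝ) ^ k) (fun k => by positivity)]
  have hint := symb_schwartz_int h
  have hre : ∀ ξ, (symb ξ : ℂ) * h ξ =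
      ((-(symb ξ * fderiv ℝ (fun η : EuclideanSpace ℝ (Fin 3) => η 2 * φ η) ξ e) : ℝ) : ℂ) := by
    intro ξ; rw [hder]; push_cast; ring
  simp_rw [hre] at hint ⊢
  have hint2 := hint.re
  simp only [RCLike.re_to_complex, Complex.ofReal_re] at hint2
  rw [integral_complex_ofReal, integral_neg, ibp φ hsm hrange hsupp (by simpa using hint2.neg), neg_neg,
    ← Finset.sum_mul]
  push_cast
  congr 2
  refine Finset.sum_congr rfl fun k _ => ?_
  rw [mul_assoc, zpow_neg, zpow_mul', zpow_natCast, zpow_ofNat, inv_mul_cancel₀ (by simp), mul_one]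

/-- for radial, smooth, non-negative `φ : ℝ³ → [0,1]` supported in the
annulus, not identically zero, the multiplier `T` with symbol `ξ₃²(ξ₁²+ξ₂²)/|ξ|²`
satisfies `|T f_n(0)| ≥ c₀ Γ_n ∑_{k=1}^n 1/k ≥ c₀ Γ_n ln n`, with
`c₀ = 2(2π)^{-3/2} ∫ (ξ₁²+ξ₂²)² ξ₃⁴ |ξ|⁻⁴ φ dξ > 0`. -/
theorem stmt14 (φ : EuclideanSpace ℝ (Fin 3) → ℝ)
    (hsm : ContDiff ℝ (⊤ : ℕ∞) φ)
    (hrange : ∀ ξ, φ ξ ∈ Set.Icc (0 : ℝ) 1)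
    (hradial : ∀ ξ η : EuclideanSpace ℝ (Fin 3), ‖ξ‖ = ‖η‖ → φ ξ = φ η)
    (hsupp : ∀ ξ, φ ξ ≠ 0 → 4 / 3 ≤ ‖ξ‖ ∧ ‖ξ‖ ≤ 3 / 2)
    (hne : φ ≠ 0) :
    0 < 2 * (2 * Real.pi) ^ (-(3 : ℝ) / 2) *
        ∫ ξ : EuclideanSpace ℝ (Fin 3),
          ((ξ 0) ^ 2 + (ξ 1) ^ 2) ^ 2 * (ξ 2) ^ 4 / ‖ξ‖ ^ 4 * φ ξ ∧
    ∀ n : ℕ, 3 ≤ n →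
      (2 * (2 * Real.pi) ^ (-(3 : ℝ) / 2) *
          ∫ ξ : EuclideanSpace ℝ (Fin 3),
            ((ξ 0) ^ 2 + (ξ 1) ^ 2) ^ 2 * (ξ 2) ^ 4 / ‖ξ‖ ^ 4 * φ ξ) *
          Gam n * ∑ k ∈ Finset.Icc 1 n, (1 : ℝ) / k ≤ ‖Tmult (fCor φ n) 0‖ ∧
      (2 * (2 * Real.pi) ^ (-(3 : ℝ) / 2) *
          ∫ ξ : EuclideanSpace ℝ (Fin 3),
            ((ξ 0) ^ 2 + (ξ 1) ^ 2) ^ 2 * (ξ 2) ^ 4 / ‖ξ‖ ^ 4 * φ ξ) *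
          Gam n * Real.log n ≤
        (2 * (2 * Real.pi) ^ (-(3 : ℝ) / 2) *
          ∫ ξ : EuclideanSpace ℝ (Fin 3),
            ((ξ 0) ^ 2 + (ξ 1) ^ 2) ^ 2 * (ξ 2) ^ 4 / ‖ξ‖ ^ 4 * φ ξ) *
          Gam n * ∑ k ∈ Finset.Icc 1 n, (1 : ℝ) / k := by
  have hpos := pos4 φ hsm hrange hradial hsupp hne
  have hle := le42 φ hsm hrange hsupp
  have hT := Tval φ hsm hrange hsupp
  have hpi : (2 * Real.pi) ^ (-(3 : ℝ) / 2) ≤ 1 / 6 := by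
    have h3 := Real.pi_gt_three
    calc (2 * Real.pi) ^ (-(3 : ℝ) / 2) ≤ (2 * Real.pi) ^ (-1 : ℝ) :=
          Real.rpow_le_rpow_of_exponent_le (by linarith) (by norm_num)
      _ = 1 / (2 * Real.pi) := by rw [Real.rpow_neg_one, one_div]
      _ ≤ 1 / 6 := by apply one_div_le_one_div_of_le <;> linarith
  have hpi0 : 0 < (2 * Real.pi) ^ (-(3 : ℝ) / 2) := by positivity
  refine ⟨by positivity, fun n hn => ?_⟩
  have hn3 : (3 : ℝ) ≤ n := by exact_mod_cast hn
  have hlog : 1 < Real.log n := by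
    rw [Real.lt_log_iff_exp_lt (by linarith)]
    linarith [Real.exp_one_lt_d9]
  have hG : 0 ≤ Gam n := by
    unfold Gam
    exact div_nonneg zero_le_one (Real.log_nonneg hlog.le)
  have hH : Real.log n ≤ ∑ k ∈ Finset.Icc 1 n, (1 : ℝ) / k := by
    have h1 := log_add_one_le_harmonic n
    rw [harmonic_eq_sum_Icc] at h1
    push_cast at h1
    simp_rw [one_div]
    refine le_trans (Real.log_le_log (by linarith) (by linarith)) h1
  have hS : 0 ≤ ∑ k ∈ Finset.Icc 1 n, (1 : ℝ) / k := by linarith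
  generalize (∫ ξ : EuclideanSpace ℝ (Fin 3),
            ((ξ 0) ^ 2 + (ξ 1) ^ 2) ^ 2 * (ξ 2) ^ 4 / ‖ξ‖ ^ 4 * φ ξ) = I4 at *
  refine ⟨?_, mul_le_mul_of_nonneg_left hH (by positivity)⟩
  rw [hT n, Complex.norm_real]
  refine le_trans ?_ (Real.le_norm_self _)
  generalize (∫ ξ : EuclideanSpace ℝ (Fin 3),
    2 * (((ξ 0) ^ 2 + (ξ 1) ^ 2) ^ 2 * (ξ 2) ^ 2 / ‖ξ‖ ^ 4) * φ ξ) = I2 at *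
  rw [mul_assoc, mul_comm (2 * _ * I4), mul_assoc]
  refine mul_le_mul_of_nonneg_left (mul_le_mul_of_nonneg_left ?_ hS) hG
  calc 2 * (2 * Real.pi) ^ (-(3 : ℝ) / 2) * I4 ≤ 2 * (1 / 6) * I4 := by gcongr
    _ ≤ I2 := by linarith
end

section
/- Let φ : ℝ² → [0,1] be radial, smooth, non-negative, ≢ 0, supported in {4/3 ≤ |ξ| ≤ 3/2}, and define f_n(x) = Γ_n ∑_{k=1}^n (1/k) 2^{−2k}(x₁x₂ ∂₁∂₂φ̌)(2^k x), Γ_n = 1/ln ln n. Then the Fourier multiplier operator S with symbol ξ₁²ξ₂²/|ξ|² satisfies |S f_n(0)| ≥ c₀ Γ_n ∑_{k=1}^n 1/k, where c₀ = 4(2π)^{-1} ∫_{ℝ²} ξ₁⁴ξ₂⁴ |ξ|^{−6} φ(ξ) dξ > 0. -/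
open MeasureTheory Finset
open scoped FourierTransform

/-- The (complex-valued) inverse Fourier transform of a real function on `ℝ²`. -/
noncomputable def phinv2 (φ : EuclideanSpace ℝ (Fin 2) → ℝ) :
    EuclideanSpace ℝ (Fin 2) → ℂ :=
  𝓕⁻ (fun ξ => (φ ξ : ℂ))

/-- `∂₁∂₂φ̌`. -/
noncomputable def d12 (φ : EuclideanSpace ℝ (Fin 2) → ℝ) :
    EuclideanSpace ℝ (Fin 2) → ℂ :=
  fun y => fderiv ℝ
    (fun η => fderiv ℝ (phinv2 φ) η (EuclideanSpace.single 1 1)) y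
    (EuclideanSpace.single 0 1)

/-- `f_n(x) = Γ_n ∑_{k=1}^n (1/k) 2^{-2k} (x₁x₂ ∂₁∂₂φ̌)(2^k x)`. -/
noncomputable def fDamp (φ : EuclideanSpace ℝ (Fin 2) → ℝ) (n : ℕ) :
    EuclideanSpace ℝ (Fin 2) → ℂ :=
  fun x => (Gam n : ℂ) * ∑ k ∈ Finset.Icc 1 n,
    (((1 / (k : ℝ)) * (2 : ℝ) ^ (-(2 * (k : ℤ))) *
        (((2 : ℝ) ^ k • x) 0 * ((2 : ℝ) ^ k • x) 1) : ℝ) : ℂ) *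
      d12 φ ((2 : ℝ) ^ k • x)

/-- The Fourier multiplier with symbol `ξ₁²ξ₂²/|ξ|²`. -/
noncomputable def Smult (f : EuclideanSpace ℝ (Fin 2) → ℂ) :
    EuclideanSpace ℝ (Fin 2) → ℂ :=
  𝓕⁻ (fun ξ => (((ξ 0) ^ 2 * (ξ 1) ^ 2 / ‖ξ‖ ^ 2 : ℝ) : ℂ) * 𝓕 f ξ)

open SchwartzMap LineDeriv

abbrev E2 := EuclideanSpace ℝ (Fin 2)

/-- Product of a function continuous off the origin with a continuous compactly supported
function vanishing near the origin. -/
lemma cont_mul {m : E2 → ℝ} {g : E2 → ℂ} (hm : ∀ x, x ≠ 0 → ContinuousAt m x)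
    (hg : Continuous g) (h0 : (0 : E2) ∉ tsupport g) :
    Continuous (fun x => (m x : ℂ) * g x) := by
  apply continuous_of_tsupport
  intro x hx
  have hx' : x ∈ tsupport g := tsupport_mul_subset_right hx
  have hx0 : x ≠ 0 := by rintro rfl; exact h0 hx'
  exact (Complex.continuous_ofReal.continuousAt.comp (hm x hx0)).mul hg.continuousAt

lemma int_mul {m : E2 → ℝ} {g : E2 → ℂ} (hm : ∀ x, x ≠ 0 → ContinuousAt m x)
    (hg : Continuous g) (h0 : (0 : E2) ∉ tsupport g) (hc : HasCompactSupport g) :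
    Integrable (fun x => (m x : ℂ) * g x) :=
  (cont_mul hm hg h0).integrable_of_hasCompactSupport (hc.mul_left)

lemma ibp_s15 {m m' : E2 → ℝ} {v : E2} (hm : ∀ x, x ≠ 0 → ContinuousAt m x)
    (hm' : ∀ x, x ≠ 0 → ContinuousAt m' x)
    (hd : ∀ x, x ≠ 0 → HasLineDerivAt ℝ m (m' x) x v)
    (g : 𝓢(E2, ℂ)) (h0 : (0 : E2) ∉ tsupport g) (hc : HasCompactSupport g) :
    ∫ x, (m x : ℂ) * (∂_{v} g) x = - ∫ x, (m' x : ℂ) * g x := by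
  have hs := tsupport_lineDerivOp_subset v g
  have h0' : (0 : E2) ∉ tsupport (∂_{v} g : 𝓢(E2, ℂ)) := fun h => h0 (hs h)
  have hc' : HasCompactSupport (∂_{v} g : 𝓢(E2, ℂ)) := hc.mono' (subset_closure.trans hs)
  refine integral_bilinear_hasLineDerivAt_right_eq_neg_left_of_integrable
    (B := ContinuousLinearMap.mul ℝ ℂ) (f := fun x => (m x : ℂ)) (f' := fun x => (m' x : ℂ))
    (g := g) (g' := (∂_{v} g : 𝓢(E2, ℂ))) (v := v) (μ := volume) ?_ ?_ ?_ ?_ ?_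
  · exact int_mul hm' g.continuous h0 hc
  · exact int_mul hm (∂_{v} g).continuous h0' hc'
  · exact int_mul hm g.continuous h0 hc
  · intro x hx
    have hx0 : x ≠ 0 := by rintro rfl; exact h0 hx
    exact HasDerivAt.ofReal_comp (hd x hx0)
  · intro x _
    rw [SchwartzMap.lineDerivOp_apply]
    exact (g.differentiableAt.lineDifferentiableAt).hasLineDerivAt

lemma nsq_s15 (x : E2) : ‖x‖ ^ 2 = x 0 ^ 2 + x 1 ^ 2 := by
  simp [EuclideanSpace.norm_sq_eq, Fin.sum_univ_two]

lemma nsq_ne {x : E2} (hx : x ≠ 0) : x 0 ^ 2 + x 1 ^ 2 ≠ 0 := by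
  rw [← nsq_s15]; positivity

/-- The symbol. -/
noncomputable def sym0 (x : E2) : ℝ := x 0 ^ 2 * x 1 ^ 2 / ‖x‖ ^ 2
noncomputable def sym1 (x : E2) : ℝ := 2 * x 0 * x 1 ^ 4 / ‖x‖ ^ 4
noncomputable def sym2 (x : E2) : ℝ := 8 * x 0 ^ 3 * x 1 ^ 3 / ‖x‖ ^ 6

lemma c0 (x : E2) (hx : x ≠ 0) : ContinuousAt sym0 x := by
  unfold sym0
  have : ‖x‖ ^ 2 ≠ 0 := by positivity
  fun_prop (disch := assumption)
lemma c1 (x : E2) (hx : x ≠ 0) : ContinuousAt sym1 x := by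
  unfold sym1
  have : ‖x‖ ^ 4 ≠ 0 := by positivity
  fun_prop (disch := assumption)
lemma c2 (x : E2) (hx : x ≠ 0) : ContinuousAt sym2 x := by
  unfold sym2
  have : ‖x‖ ^ 6 ≠ 0 := by positivity
  fun_prop (disch := assumption)

lemma sym1_eq (x : E2) : sym1 x = 2 * x 0 * x 1 ^ 4 / (x 0 ^ 2 + x 1 ^ 2) ^ 2 := by
  rw [sym1, ← nsq_s15]; ring
lemma sym2_eq (x : E2) : sym2 x = 8 * x 0 ^ 3 * x 1 ^ 3 / (x 0 ^ 2 + x 1 ^ 2) ^ 3 := by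
  rw [sym2, ← nsq_s15]; ring

lemma d01 (x : E2) (hx : x ≠ 0) :
    HasLineDerivAt ℝ sym0 (sym1 x) x (EuclideanSpace.single 0 1) := by
  have h := nsq_ne hx
  have e : (fun t : ℝ => sym0 (x + t • EuclideanSpace.single 0 1)) =
      fun t => (x 0 + t) ^ 2 * x 1 ^ 2 / ((x 0 + t) ^ 2 + x 1 ^ 2) := by
    funext t; simp [sym0, nsq_s15]
  unfold HasLineDerivAt
  rw [e, sym1_eq]
  have ht : HasDerivAt (fun t : ℝ => (x 0 + t) ^ 2) (2 * x 0) 0 := by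
    simpa using ((hasDerivAt_id' (0 : ℝ)).const_add (x 0)).fun_pow 2
  have := (ht.mul_const (x 1 ^ 2)).fun_div (ht.add_const (x 1 ^ 2)) (by simpa using h)
  refine this.congr_deriv ?_
  simp only [add_zero]
  congr 1
  ring

lemma d12' (x : E2) (hx : x ≠ 0) :
    HasLineDerivAt ℝ sym1 (sym2 x) x (EuclideanSpace.single 1 1) := by
  have h := nsq_ne hx
  have e : (fun t : ℝ => sym1 (x + t • EuclideanSpace.single 1 1)) =
      fun t => 2 * x 0 * (x 1 + t) ^ 4 / (x 0 ^ 2 + (x 1 + t) ^ 2) ^ 2 := by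
    funext t; simp [sym1_eq]
  unfold HasLineDerivAt
  rw [e, sym2_eq]
  have hb := (hasDerivAt_id' (0 : ℝ)).const_add (x 1)
  have h4 : HasDerivAt (fun t : ℝ => (x 1 + t) ^ 4) (4 * x 1 ^ 3) 0 := by
    simpa using hb.fun_pow 4
  have h2 : HasDerivAt (fun t : ℝ => (x 1 + t) ^ 2) (2 * x 1) 0 := by
    simpa using hb.fun_pow 2
  have := (h4.const_mul (2 * x 0)).fun_div ((h2.const_add (x 0 ^ 2)).fun_pow 2)
    (by simpa using h)
  refine this.congr_deriv ?_
  simp only [add_zero]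
  field_simp
  ring

/-- Scaling. -/
lemma scal (G : 𝓢(E2, ℂ)) (R : ℝ) (hR : 0 < R) : ∃ H : 𝓢(E2, ℂ),
    (∀ x, H x = ((R ^ 2)⁻¹ : ℝ) * G (R⁻¹ • x)) ∧ ∀ x, (𝓕⁻ G) (R • x) = (𝓕⁻ H) x := by
  let L : E2 ≃L[ℝ] E2 := ContinuousLinearEquiv.smulLeft (Units.mk0 R⁻¹ (inv_ne_zero hR.ne'))
  refine ⟨(((R ^ 2)⁻¹ : ℝ) : ℂ) • compCLMOfContinuousLinearEquiv ℂ L G, ?_, ?_⟩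
  · intro x; rfl
  · intro x
    rw [fourierInv_coe, fourierInv_coe, Real.fourierInv_eq, Real.fourierInv_eq]
    have := Measure.integral_comp_inv_smul_of_nonneg (volume : Measure E2)
      (fun v => Real.fourierChar (inner ℝ v (R • x)) • G v) hR.le
    simp only [finrank_euclideanSpace, Fintype.card_fin] at this
    have e : ∀ v : E2, Real.fourierChar (inner ℝ v x) •
        ((((R ^ 2)⁻¹ : ℝ) : ℂ) • compCLMOfContinuousLinearEquiv ℂ L G) v =
        ((R ^ 2)⁻¹ : ℝ) • (Real.fourierChar (inner ℝ (R⁻¹ • v) (R • x)) • G (R⁻¹ • v)) := by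
      intro v
      have : inner ℝ (R⁻¹ • v) (R • x) = inner ℝ v x := by
        rw [real_inner_smul_left, real_inner_smul_right]; field_simp
      rw [this, smul_comm]; rfl
    simp_rw [e]
    rw [integral_smul, this, smul_smul, inv_mul_cancel₀ (by positivity), one_smul]

lemma inner0 (x : E2) : inner ℝ x (EuclideanSpace.single 0 1) = x 0 := by
  rw [EuclideanSpace.inner_single_right]; simp
lemma inner1 (x : E2) : inner ℝ x (EuclideanSpace.single 1 1) = x 1 := by
  rw [EuclideanSpace.inner_single_right]; simp

/-- `x₁ x₂ ∂₁∂₂ φ̌` is the inverse Fourier transform of `∂₁∂₂(ξ₁ξ₂φ)`. -/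
lemma key (φ : E2 → ℝ) (ψ : 𝓢(E2, ℂ)) (hψ : ∀ x, ψ x = φ x) : ∃ F : 𝓢(E2, ℂ),
    (∀ x, F x = ((x 0 * x 1 : ℝ) : ℂ) * ψ x) ∧
    ∀ x, ((x 0 * x 1 : ℝ) : ℂ) * d12 φ x =
      (𝓕⁻ (∂_{(EuclideanSpace.single 0 1 : E2)} (∂_{(EuclideanSpace.single 1 1 : E2)} F))) x := by
  set e0 : E2 := EuclideanSpace.single 0 1
  set e1 : E2 := EuclideanSpace.single 1 1
  have t0 : (fun x : E2 => inner ℝ x e0).HasTemperateGrowth := by fun_prop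
  have t1 : (fun x : E2 => inner ℝ x e1).HasTemperateGrowth := by fun_prop
  have hp : phinv2 φ = ⇑(𝓕⁻ ψ : 𝓢(E2, ℂ)) := by
    rw [fourierInv_coe, phinv2]; congr 1; funext x; exact (hψ x).symm
  have hd : d12 φ = ⇑(∂_{e0} (∂_{e1} (𝓕⁻ ψ : 𝓢(E2, ℂ))) : 𝓢(E2, ℂ)) := by
    funext y; rw [d12, hp]; rfl
  refine ⟨smulLeftCLM ℂ (inner ℝ · e0) (smulLeftCLM ℂ (inner ℝ · e1) ψ), ?_, ?_⟩
  · intro x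
    rw [smulLeftCLM_apply_apply t0, smulLeftCLM_apply_apply t1, inner0, inner1]
    simp [mul_assoc]
  · intro x
    rw [hd, lineDerivOp_fourierInv_eq, lineDerivOp_fourierInv_eq, fourierInv_lineDerivOp_eq,
      fourierInv_lineDerivOp_eq]
    have i0 : inner ℝ x e0 = x 0 := inner0 x
    have i1 : inner ℝ x e1 = x 1 := inner1 x
    have hcomm : ∀ (a : ℂ) (f : 𝓢(E2, ℂ)), smulLeftCLM ℂ (fun x : E2 => inner ℝ x e0) (a • f) =
        a • smulLeftCLM ℂ (fun x : E2 => inner ℝ x e0) f := by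
      intro a f
      ext y
      rw [smulLeftCLM_apply_apply t0, smul_apply, smul_apply, smulLeftCLM_apply_apply t0, smul_comm]
    simp only [hcomm, FourierTransform.fourierInv_smul, smul_apply,
      smulLeftCLM_apply_apply t0, smulLeftCLM_apply_apply t1, i0, i1]
    simp
    ring

lemma sym0_smul (R : ℝ) (hR : R ≠ 0) (x : E2) : sym0 (R • x) = R ^ 2 * sym0 x := by
  simp only [sym0, norm_smul, PiLp.smul_apply, smul_eq_mul, mul_pow, Real.norm_eq_abs, sq_abs]
  by_cases hx : x = 0
  · simp [hx]
  · have : ‖x‖ ≠ 0 := by positivity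
    field_simp

lemma smult_eval (φ : E2 → ℝ) (G : 𝓢(E2, ℂ))
    (hG : ∀ x : E2, ((x 0 * x 1 : ℝ) : ℂ) * d12 φ x = (𝓕⁻ G : 𝓢(E2, ℂ)) x)
    (hi : Integrable (fun x => (sym0 x : ℂ) * G x)) (n : ℕ) :
    Smult (fDamp φ n) 0 = (Gam n : ℂ) * (∑ k ∈ Finset.Icc 1 n, ((1 / (k : ℝ) : ℝ) : ℂ)) *
      ∫ x, (sym0 x : ℂ) * G x := by
  have hs := fun k : ℕ => scal G ((2 : ℝ) ^ k) (by positivity)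
  choose H hH1 hH2 using hs
  let c : ℕ → ℂ := fun k => (((1 / (k : ℝ)) * (2 : ℝ) ^ (-(2 * (k : ℤ))) : ℝ) : ℂ)
  let T : 𝓢(E2, ℂ) := (Gam n : ℂ) • ∑ k ∈ Finset.Icc 1 n, c k • H k
  have hT : ∀ x, T x = (Gam n : ℂ) * ∑ k ∈ Finset.Icc 1 n, c k * H k x := by
    intro x
    simp [T]
  have hf : fDamp φ n = ⇑(𝓕⁻ T : 𝓢(E2, ℂ)) := by
    have : (𝓕⁻ T : 𝓢(E2, ℂ)) = (Gam n : ℂ) • ∑ k ∈ Finset.Icc 1 n, c k • (𝓕⁻ (H k) : 𝓢(E2, ℂ)) := by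
      change (FourierTransform.fourierCLE ℂ 𝓢(E2, ℂ)).symm T = _
      simp only [T, map_smul, map_sum]
      rfl
    rw [this]
    funext x
    simp only [smul_apply, _root_.sum_apply, smul_eq_mul, fDamp]
    congr 1
    refine Finset.sum_congr rfl fun k _ => ?_
    rw [← hH2 k x, ← hG]
    simp only [c]
    push_cast
    ring
  have hF : 𝓕 (fDamp φ n) = ⇑T := by
    rw [hf, ← fourier_coe, FourierTransform.fourier_fourierInv_eq]
  have hk : ∀ k : ℕ, ∀ x, (sym0 x : ℂ) * (c k * H k x) =
      (c k) * ((sym0 (((2 : ℝ) ^ k)⁻¹ • x) : ℂ) * G (((2 : ℝ) ^ k)⁻¹ • x)) := by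
    intro k x
    rw [hH1, sym0_smul _ (by positivity)]
    push_cast
    ring
  have hki : ∀ k : ℕ, Integrable (fun x => (sym0 x : ℂ) * (c k * H k x)) := by
    intro k
    simp_rw [hk]
    exact (hi.comp_smul (R := ((2 : ℝ) ^ k)⁻¹) (by positivity)).const_mul _
  have hkI : ∀ k : ℕ, ∫ x, (sym0 x : ℂ) * (c k * H k x) =
      ((1 / (k : ℝ) : ℝ) : ℂ) * ∫ x, (sym0 x : ℂ) * G x := by
    intro k
    simp_rw [hk]
    rw [integral_const_mul]
    have := Measure.integral_comp_inv_smul_of_nonneg (volume : Measure E2)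
      (fun x => (sym0 x : ℂ) * G x) (R := (2 : ℝ) ^ k) (by positivity)
    rw [this]
    simp only [finrank_euclideanSpace, Fintype.card_fin, c]
    rw [Complex.real_smul, ← mul_assoc, ← Complex.ofReal_mul]
    congr 2
    rw [zpow_neg, mul_comm 2 (k : ℤ), zpow_mul, zpow_natCast]
    rw [mul_assoc]
    norm_cast
    rw [inv_mul_cancel₀ (by positivity), mul_one]
  rw [Smult, hF, Real.fourierInv_eq]
  simp only [inner_zero_right, AddChar.map_zero_eq_one, one_smul]
  change ∫ v, (sym0 v : ℂ) * T v = _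
  simp_rw [hT, mul_left_comm _ (Gam n : ℂ), Finset.mul_sum]
  rw [integral_finsetSum _ (fun k _ => (hki k).const_mul _)]
  simp_rw [integral_const_mul, hkI]
  rw [Finset.sum_mul]
  refine Finset.sum_congr rfl fun k _ => ?_
  ring

/-- for radial, smooth, non-negative `φ : ℝ² → [0,1]` supported in the
annulus, not identically zero, the multiplier `S` with symbol `ξ₁²ξ₂²/|ξ|²` satisfies
`|S f_n(0)| ≥ c₀ Γ_n ∑_{k=1}^n 1/k` with `c₀ = 4(2π)^{-1} ∫ ξ₁⁴ξ₂⁴|ξ|⁻⁶ φ dξ > 0`. -/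
theorem stmt15 (φ : EuclideanSpace ℝ (Fin 2) → ℝ)
    (hsm : ContDiff ℝ (⊤ : ℕ∞) φ)
    (hrange : ∀ ξ, φ ξ ∈ Set.Icc (0 : ℝ) 1)
    (hradial : ∀ ξ η : EuclideanSpace ℝ (Fin 2), ‖ξ‖ = ‖η‖ → φ ξ = φ η)
    (hsupp : ∀ ξ, φ ξ ≠ 0 → 4 / 3 ≤ ‖ξ‖ ∧ ‖ξ‖ ≤ 3 / 2)
    (hne : φ ≠ 0) :
    0 < 4 * (2 * Real.pi)⁻¹ *
        ∫ ξ : EuclideanSpace ℝ (Fin 2), (ξ 0) ^ 4 * (ξ 1) ^ 4 / ‖ξ‖ ^ 6 * φ ξ ∧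
    ∀ n : ℕ, 3 ≤ n →
      (4 * (2 * Real.pi)⁻¹ *
          ∫ ξ : EuclideanSpace ℝ (Fin 2), (ξ 0) ^ 4 * (ξ 1) ^ 4 / ‖ξ‖ ^ 6 * φ ξ) *
        Gam n * ∑ k ∈ Finset.Icc 1 n, (1 : ℝ) / k ≤ ‖Smult (fDamp φ n) 0‖ := by
  have hcl : IsClosed {x : E2 | 4 / 3 ≤ ‖x‖ ∧ ‖x‖ ≤ 3 / 2} :=
    (isClosed_le continuous_const continuous_norm).inter
      (isClosed_le continuous_norm continuous_const)
  have hts : tsupport φ ⊆ {x : E2 | 4 / 3 ≤ ‖x‖ ∧ ‖x‖ ≤ 3 / 2} :=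
    closure_minimal (fun x hx => hsupp x hx) hcl
  have hφc : HasCompactSupport φ := by
    refine HasCompactSupport.of_support_subset_isCompact
      (isCompact_closedBall (0 : E2) (3 / 2)) fun x hx => ?_
    simpa using (hsupp x hx).2
  have h0φ : (0 : E2) ∉ tsupport φ := by
    intro h
    have := (hts h).1
    norm_num at this
  let q : E2 → ℂ := fun x => (φ x : ℂ)
  have hqs : Function.support q = Function.support φ := by
    ext x; simp [q]
  have hqc : HasCompactSupport q := by
    rw [HasCompactSupport, tsupport, hqs]; exact hφc
  have hqsm : ContDiff ℝ (⊤ : ℕ∞) q := Complex.ofRealCLM.contDiff.comp hsm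
  let ψ : 𝓢(E2, ℂ) := hqc.toSchwartzMap hqsm
  have hψ : ∀ x, ψ x = φ x := fun x => rfl
  obtain ⟨F, hF1, hF2⟩ := key φ ψ hψ
  have hFs : tsupport F ⊆ tsupport φ := by
    refine closure_mono fun x hx => ?_
    rw [Function.mem_support, hF1, hψ] at hx
    intro h
    simp [h] at hx
  have h0F : (0 : E2) ∉ tsupport F := fun h => h0φ (hFs h)
  have hFc : HasCompactSupport F := hφc.mono' (subset_closure.trans hFs)
  set e0 : E2 := EuclideanSpace.single 0 1
  set e1 : E2 := EuclideanSpace.single 1 1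
  have hs1 := tsupport_lineDerivOp_subset e1 F
  have h01 : (0 : E2) ∉ tsupport (∂_{e1} F : 𝓢(E2, ℂ)) := fun h => h0F (hs1 h)
  have hc1 : HasCompactSupport (∂_{e1} F : 𝓢(E2, ℂ)) := hFc.mono' (subset_closure.trans hs1)
  have hs2 := tsupport_lineDerivOp_subset e0 (∂_{e1} F)
  have h02 : (0 : E2) ∉ tsupport (∂_{e0} (∂_{e1} F) : 𝓢(E2, ℂ)) := fun h => h01 (hs2 h)
  have hc2 : HasCompactSupport (∂_{e0} (∂_{e1} F) : 𝓢(E2, ℂ)) :=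
    hc1.mono' (subset_closure.trans hs2)
  have hi := int_mul c0 (∂_{e0} (∂_{e1} F)).continuous h02 hc2
  set I : ℝ := ∫ ξ : E2, (ξ 0) ^ 4 * (ξ 1) ^ 4 / ‖ξ‖ ^ 6 * φ ξ with hI
  have hval : ∫ x, (sym0 x : ℂ) * (∂_{e0} (∂_{e1} F)) x = ((8 * I : ℝ) : ℂ) := by
    rw [ibp_s15 c0 c1 d01 _ h01 hc1, ibp_s15 c1 c2 d12' _ h0F hFc, neg_neg, hI, ← integral_const_mul,
      ← integral_complex_ofReal]
    refine integral_congr_ae (Filter.Eventually.of_forall fun x => ?_)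
    simp only [hF1, hψ, sym2]
    push_cast
    ring
  have hIpos : 0 < I := by
    have hcont : Continuous fun ξ : E2 => (ξ 0) ^ 4 * (ξ 1) ^ 4 / ‖ξ‖ ^ 6 * φ ξ := by
      apply continuous_of_tsupport
      intro x hx
      have hx' : x ∈ tsupport φ := tsupport_mul_subset_right hx
      have hx0 : x ≠ 0 := by rintro rfl; exact h0φ hx'
      have h6 : ‖x‖ ^ 6 ≠ 0 := by positivity
      have := hsm.continuous
      fun_prop (disch := assumption)
    obtain ⟨z, hz⟩ := Function.ne_iff.mp hne
    have hz' : φ z ≠ 0 := hz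
    have hr := (hsupp z hz').1
    set r := ‖z‖
    have hrp : 0 < r := by linarith
    let w : E2 := !₂[3 / 5 * r, 4 / 5 * r]
    have hw : ‖w‖ = r := by
      have : ‖w‖ ^ 2 = r ^ 2 := by
        rw [nsq_s15]; simp [w]; ring
      exact (sq_eq_sq₀ (norm_nonneg _) hrp.le).mp this
    have hφw : φ w ≠ 0 := by rw [hradial w z hw]; exact hz'
    refine hcont.integral_pos_of_hasCompactSupport_nonneg_nonzero hφc.mul_left ?_ (x := w) ?_
    · intro x
      have := (hrange x).1
      have h4 : 0 ≤ (x 0) ^ 4 := by positivity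
      have h5 : 0 ≤ (x 1) ^ 4 := by positivity
      change 0 ≤ (x 0) ^ 4 * (x 1) ^ 4 / ‖x‖ ^ 6 * φ x
      positivity
    · rw [hw]
      have a0 : w 0 = 3 / 5 * r := rfl
      have a1 : w 1 = 4 / 5 * r := rfl
      rw [a0, a1]
      positivity
  refine ⟨by positivity, fun n hn => ?_⟩
  rw [smult_eval φ _ hF2 hi n, hval, ← Complex.ofReal_sum, ← Complex.ofReal_mul,
    ← Complex.ofReal_mul, Complex.norm_real]
  set s := ∑ k ∈ Finset.Icc 1 n, (1 : ℝ) / k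
  have hs : 0 ≤ s := Finset.sum_nonneg fun k _ => by positivity
  have hpi : (2 * Real.pi)⁻¹ ≤ 1 := inv_le_one_of_one_le₀ (by linarith [Real.pi_gt_three])
  have hpi0 : 0 ≤ (2 * Real.pi)⁻¹ := by positivity
  rw [Real.norm_eq_abs, abs_mul, abs_mul, abs_of_nonneg hs, abs_of_pos (by positivity : 0 < 8 * I)]
  calc 4 * (2 * Real.pi)⁻¹ * I * Gam n * s
      ≤ 4 * (2 * Real.pi)⁻¹ * I * |Gam n| * s := by gcongr; exact le_abs_self _
    _ = (|Gam n| * s * I) * (4 * (2 * Real.pi)⁻¹) := by ring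
    _ ≤ (|Gam n| * s * I) * 8 := by gcongr; linarith
    _ = |Gam n| * s * (8 * I) := by ring
end
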